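/- arXiv:1112.3936 — 4 statements merged into one kernel-verified Lean document; each statement's English description precedes it below -/
import Mathlib

section
/- Let α : ℝ → ℝ³ be a C¹ curve with α(s) ∈ 𝕊²₁ for all s, and set ψ = π ∘ α. Then for every s, ⟨ψ'(s), ψ'(s)⟩ = ⟨α'(s), α'(s)⟩/(1 + ⟨α(s),a⟩²) + ⟨α'(s),a⟩²/(1 + ⟨α(s),a⟩²)², and in particular ⟨ψ'(s), ψ'(s)⟩ ≥ ⟨α'(s), α'(s)⟩/(1 + ⟨α(s),a⟩²). Consequently, if α is spacelike (⟨α'(s),α'(s)⟩ > 0 for all s), then ψ'(s) ≠ 0 for all s, i.e. ψ is a regular curve on the waist C. -/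
/-!
For a C¹ curve α on the pseudosphere with projection ψ = π ∘ α:
⟨ψ',ψ'⟩ = ⟨α',α'⟩/(1+⟨α,a⟩²) + ⟨α',a⟩²/(1+⟨α,a⟩²)² ≥ ⟨α',α'⟩/(1+⟨α,a⟩²),
so if α is spacelike then ψ is regular.
-/

/-- The Lorentzian inner product on ℝ³. -/
def lorentz (x y : Fin 3 → ℝ) : ℝ := x 0 * y 0 + x 1 * y 1 - x 2 * y 2

/-- The timelike vector a = (0,0,1). -/
def aVec : Fin 3 → ℝ := ![0, 0, 1]

/-- The unit pseudosphere (de Sitter surface) 𝕊²₁. -/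
def pseudoSphere : Set (Fin 3 → ℝ) := {x | lorentz x x = 1}

/-- Geodesic projection π(p) = (p + ⟨p,a⟩a)/√(1 + ⟨p,a⟩²). -/
noncomputable def piProj (p : Fin 3 → ℝ) : Fin 3 → ℝ :=
  (1 / Real.sqrt (1 + (lorentz p aVec) ^ 2)) • (p + (lorentz p aVec) • aVec)

/-!
Write `q = p + ⟨p, a⟩ a` for the orthogonal projection of `p` to `a^⊥`. As `⟨a, a⟩ = -1`, it
satisfies `⟨q₁, q₂⟩ = ⟨p₁, p₂⟩ + ⟨p₁, a⟩⟨p₂, a⟩`; so on the pseudosphere `⟨q, q⟩ = 1 + ⟨p, a⟩²`, and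
the geodesic projection is the normalization `q / √⟨q, q⟩`. Normalizing a curve removes the
component of its velocity along `q` and divides by the length, whence
`⟨ψ', ψ'⟩ = ⟨q', q'⟩ / ⟨q, q⟩ - ⟨q, q'⟩² / ⟨q, q⟩²`.
With `h = ⟨α, a⟩` we have `⟨q', q'⟩ = ⟨α', α'⟩ + h'²`, and `⟨α, α'⟩ = 0` gives `⟨q, q'⟩ = h h'`.
-/

section

open scoped Topology

variable {E : Type*} [NormedAddCommGroup E] [NormedSpace ℝ E] {B : E →L[ℝ] E →L[ℝ] ℝ}
  {a : E} {q : ℝ → E} {v : E} {s : ℝ}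

/-- The orthogonal projection `x ↦ x + ⟨x, a⟩ a` onto the complement of `a`, for a vector `a`
normalized by `⟨a, a⟩ = -1`; the scalar product `⟨x, y⟩` is `B x y`. -/
noncomputable def orthogonalPart (B : E →L[ℝ] E →L[ℝ] ℝ) (a : E) : E →L[ℝ] E :=
  .id ℝ E + (B.flip a).smulRight a

/-- The geodesic projection of the pseudosphere `⟨p, p⟩ = 1` to its waist orthogonal to `a`, in a
space with an arbitrary scalar product `⟨x, y⟩ = B x y` and `⟨a, a⟩ = -1`. -/
noncomputable def geodesicProj (B : E →L[ℝ] E →L[ℝ] ℝ) (a p : E) : E :=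
  (1 / √(1 + B p a ^ 2)) • (p + B p a • a)

theorem orthogonalPart_apply (x : E) : orthogonalPart B a x = x + B x a • a := rfl

theorem bilin_orthogonalPart (hB : ∀ x y, B x y = B y x) (ha : B a a = -1) (x y : E) :
    B (orthogonalPart B a x) (orthogonalPart B a y) = B x y + B x a * B y a := by
  simp only [orthogonalPart_apply, map_add, map_smul, add_apply, smul_apply, smul_eq_mul, ha, hB a]
  ring

theorem geodesicProj_eq_normalize (hB : ∀ x y, B x y = B y x) (ha : B a a = -1) {p : E}
    (hp : B p p = 1) :
    geodesicProj B a p =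
      (1 / √(B (orthogonalPart B a p) (orthogonalPart B a p))) • orthogonalPart B a p := by
  rw [bilin_orthogonalPart hB ha, hp, ← sq, orthogonalPart_apply, geodesicProj]

theorem hasDerivAt_bilin_self (hB : ∀ x y, B x y = B y x) (hq : HasDerivAt q v s) :
    HasDerivAt (fun t => B (q t) (q t)) (2 * B (q s) v) s := by
  have h := B.hasDerivAt_of_bilinear (fun _ => hq) (fun _ => hq)
  rwa [hB v, ← two_mul] at h

theorem bilin_deriv_eq_zero_of_eventually_const (hB : ∀ x y, B x y = B y x)
    (hq : HasDerivAt q v s) {c : ℝ} (hc : ∀ᶠ t in 𝓝 s, B (q t) (q t) = c) : B (q s) v = 0 := by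
  have h := (hasDerivAt_bilin_self hB hq).unique ((hasDerivAt_const s c).congr_of_eventuallyEq hc)
  simpa using h

theorem hasDerivAt_normalize (hB : ∀ x y, B x y = B y x) (hq : HasDerivAt q v s)
    (hpos : 0 < B (q s) (q s)) :
    HasDerivAt (fun t => (1 / √(B (q t) (q t))) • q t)
      ((1 / √(B (q s) (q s))) • (v - (B (q s) v / B (q s) (q s)) • q s)) s := by
  have hsqrt := (hasDerivAt_bilin_self hB hq).sqrt hpos.ne'
  have hinv := hsqrt.fun_inv (Real.sqrt_pos.2 hpos).ne'
  simp only [one_div]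
  convert hinv.fun_smul hq using 1
  rw [Real.sq_sqrt hpos.le]
  module

theorem bilin_sub_proj_self (hB : ∀ x y, B x y = B y x) {x : E} (hx : B x x ≠ 0) (y : E) :
    B (y - (B x y / B x x) • x) (y - (B x y / B x x) • x) = B y y - B x y ^ 2 / B x x := by
  simp only [map_sub, map_smul, sub_apply, smul_apply, smul_eq_mul, hB y x]
  field_simp
  ring

theorem bilin_deriv_normalize_self (hB : ∀ x y, B x y = B y x) (hq : HasDerivAt q v s)
    (hpos : 0 < B (q s) (q s)) :
    B (deriv (fun t => (1 / √(B (q t) (q t))) • q t) s)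
        (deriv (fun t => (1 / √(B (q t) (q t))) • q t) s) =
      B v v / B (q s) (q s) - B (q s) v ^ 2 / B (q s) (q s) ^ 2 := by
  rw [(hasDerivAt_normalize hB hq hpos).deriv]
  simp only [map_smul, smul_apply, smul_eq_mul]
  rw [bilin_sub_proj_self hB hpos.ne', ← mul_assoc, div_mul_div_comm, Real.mul_self_sqrt hpos.le]
  field_simp

theorem bilin_deriv_geodesicProj_self (hB : ∀ x y, B x y = B y x) (ha : B a a = -1)
    {α : ℝ → E} (hα : DifferentiableAt ℝ α s) (hS : ∀ᶠ t in 𝓝 s, B (α t) (α t) = 1) :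
    B (deriv (fun t => geodesicProj B a (α t)) s) (deriv (fun t => geodesicProj B a (α t)) s) =
      B (deriv α s) (deriv α s) / (1 + B (α s) a ^ 2)
        + B (deriv α s) a ^ 2 / (1 + B (α s) a ^ 2) ^ 2 := by
  have hq : HasDerivAt (fun t => orthogonalPart B a (α t)) (orthogonalPart B a (deriv α s)) s :=
    (orthogonalPart B a).hasFDerivAt.comp_hasDerivAt s hα.hasDerivAt
  have hqq : B (orthogonalPart B a (α s)) (orthogonalPart B a (α s)) = 1 + B (α s) a ^ 2 := by
    rw [bilin_orthogonalPart hB ha, hS.self_of_nhds, sq]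
  have horth : B (α s) (deriv α s) = 0 :=
    bilin_deriv_eq_zero_of_eventually_const hB hα.hasDerivAt hS
  have hψ := hS.mono fun t ht => geodesicProj_eq_normalize hB ha ht
  rw [Filter.EventuallyEq.deriv_eq hψ, bilin_deriv_normalize_self hB hq (hqq ▸ by positivity), hqq,
    bilin_orthogonalPart hB ha, bilin_orthogonalPart hB ha, horth]
  field_simp
  ring

theorem stmt_4_general (hB : ∀ x y, B x y = B y x) (ha : B a a = -1)
    {α : ℝ → E} (hα : DifferentiableAt ℝ α s) (hS : ∀ᶠ t in 𝓝 s, B (α t) (α t) = 1)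
    {ψ : ℝ → E} (hψ : ψ = fun t => geodesicProj B a (α t)) :
    B (deriv ψ s) (deriv ψ s) =
        B (deriv α s) (deriv α s) / (1 + B (α s) a ^ 2)
        + B (deriv α s) a ^ 2 / (1 + B (α s) a ^ 2) ^ 2 ∧
    B (deriv α s) (deriv α s) / (1 + B (α s) a ^ 2) ≤ B (deriv ψ s) (deriv ψ s) ∧
    (0 < B (deriv α s) (deriv α s) → deriv ψ s ≠ 0) := by
  have heq := hψ ▸ bilin_deriv_geodesicProj_self hB ha hα hS
  have hle : B (deriv α s) (deriv α s) / (1 + B (α s) a ^ 2) ≤ B (deriv ψ s) (deriv ψ s) :=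
    heq ▸ le_add_of_nonneg_right (by positivity)
  refine ⟨heq, hle, fun hpos hzero => ?_⟩
  have hψpos : 0 < B (deriv ψ s) (deriv ψ s) := (div_pos hpos (by positivity)).trans_le hle
  simp [hzero] at hψpos

end

/-- The Lorentzian inner product `lorentz` as a continuous bilinear form. -/
noncomputable def lorentzForm : (Fin 3 → ℝ) →L[ℝ] (Fin 3 → ℝ) →L[ℝ] ℝ :=
  let x (i : Fin 3) : (Fin 3 → ℝ) →L[ℝ] ℝ := .proj i
  (x 0).smulRight (x 0) + (x 1).smulRight (x 1) - (x 2).smulRight (x 2)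

theorem lorentzForm_apply (x y : Fin 3 → ℝ) : lorentzForm x y = lorentz x y := rfl

theorem lorentzForm_comm (x y : Fin 3 → ℝ) : lorentzForm x y = lorentzForm y x := by
  simp only [lorentzForm_apply, lorentz, mul_comm]

theorem lorentzForm_aVec_self : lorentzForm aVec aVec = -1 := by
  simp [lorentzForm_apply, lorentz, aVec]

theorem stmt_4 (α : ℝ → (Fin 3 → ℝ)) (hα : ContDiff ℝ 1 α)
    (hS : ∀ s : ℝ, α s ∈ pseudoSphere)
    (ψ : ℝ → (Fin 3 → ℝ)) (hψ : ψ = fun s => piProj (α s)) :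
    (∀ s : ℝ, lorentz (deriv ψ s) (deriv ψ s) =
        lorentz (deriv α s) (deriv α s) / (1 + (lorentz (α s) aVec) ^ 2)
        + (lorentz (deriv α s) aVec) ^ 2 / (1 + (lorentz (α s) aVec) ^ 2) ^ 2) ∧
    (∀ s : ℝ, lorentz (deriv α s) (deriv α s) / (1 + (lorentz (α s) aVec) ^ 2) ≤
        lorentz (deriv ψ s) (deriv ψ s)) ∧
    ((∀ s : ℝ, 0 < lorentz (deriv α s) (deriv α s)) → ∀ s : ℝ, deriv ψ s ≠ 0) := by
  have h (s : ℝ) := stmt_4_general lorentzForm_comm lorentzForm_aVec_self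
    (hα.differentiable one_ne_zero s) (.of_forall hS) hψ
  exact ⟨fun s => (h s).1, fun s => (h s).2.1, fun hpos s => (h s).2.2 (hpos s)⟩
end

section
/- Let α : 𝕊¹ → 𝕊²₁ be a closed spacelike C¹ curve (i.e. α is C¹ with ⟨α'(s), α'(s)⟩ > 0 for all s). Then π ∘ α : 𝕊¹ → C is a covering map of the waist C. -/
/-- The waist C of the pseudosphere: the unit circle in the plane x₃ = 0. -/
def waist : Set (Fin 3 → ℝ) := {x | lorentz x x = 1 ∧ x 2 = 0}

/-!
Write the first two coordinates of `α` as a complex curve `γ`. Since `α` lies on the pseudosphere,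
`π ∘ α` is `γ / ‖γ‖`, that is `exp (i θ)` for the angle `θ = Im ∫ γ' / γ`. Differentiating
`⟨α, α⟩ = 1` gives `⟨α, α'⟩ = 0`, and Lagrange's identity then shows that `θ'` vanishes nowhere if
`α'` is spacelike. So `θ`, and with it `π ∘ α`, is a local homeomorphism, and a local homeomorphism
from a compact space to a Hausdorff space is a covering map.
-/

section LocalHomeomorph

theorem isLocalHomeomorph_of_comp_surjective {X Y Z : Type*} [TopologicalSpace X]
    [TopologicalSpace Y] [TopologicalSpace Z] {f : Y → Z} {g : X → Y}
    (hfg : IsLocalHomeomorph (f ∘ g)) (hg : IsLocalHomeomorph g) (hsurj : Function.Surjective g) :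
    IsLocalHomeomorph f := by
  have hf := hfg.isLocalHomeomorphOn (s := Set.univ) |>.of_comp_right hg.isLocalHomeomorphOn
  rwa [Set.image_univ, hsurj.range_eq, ← isLocalHomeomorph_iff_isLocalHomeomorphOn_univ] at hf

theorem isLocalHomeomorph_of_hasStrictDerivAt {𝕜 : Type*} [NontriviallyNormedField 𝕜]
    [CompleteSpace 𝕜] {f f' : 𝕜 → 𝕜} (hf : ∀ x, HasStrictDerivAt f (f' x) x)
    (hf' : ∀ x, f' x ≠ 0) : IsLocalHomeomorph f := fun x ↦
  have hx := (hf x).hasStrictFDerivAt_equiv (hf' x)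
  ⟨hx.toOpenPartialHomeomorph f, hx.mem_toOpenPartialHomeomorph_source, rfl⟩

end LocalHomeomorph

section PlaneCurve

variable {γ γ' : ℝ → ℂ}

theorem exists_hasStrictDerivAt_exp_eq (hγ : ∀ s, HasDerivAt γ (γ' s) s) (hγ' : Continuous γ')
    (hγ₀ : ∀ s, γ s ≠ 0) :
    ∃ L : ℝ → ℂ, (∀ s, HasStrictDerivAt L (γ' s / γ s) s) ∧ ∀ s, Complex.exp (L s) = γ s := by
  have hγ_cont : Continuous γ := continuous_iff_continuousAt.2 fun s ↦ (hγ s).continuousAt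
  let L : ℝ → ℂ := fun s ↦ Complex.log (γ 0) + ∫ t in (0 : ℝ)..s, γ' t / γ t
  have hL : ∀ s, HasStrictDerivAt L (γ' s / γ s) s := fun s ↦
    ((hγ'.div hγ_cont hγ₀).integral_hasStrictDerivAt 0 s).const_add _
  have hquot : ∀ s, HasDerivAt (fun s ↦ Complex.exp (L s) / γ s) 0 s := fun s ↦ by
    refine ((hL s).hasDerivAt.cexp.fun_div (hγ s) (hγ₀ s)).congr_deriv ?_
    field_simp [hγ₀ s]
    ring
  refine ⟨L, hL, fun s ↦ (div_eq_one_iff_eq (hγ₀ s)).1 ?_⟩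
  calc Complex.exp (L s) / γ s = Complex.exp (L 0) / γ 0 :=
        is_const_of_deriv_eq_zero (fun s ↦ (hquot s).differentiableAt) (fun s ↦ (hquot s).deriv) s 0
    _ = 1 := by simp [L, Complex.exp_log (hγ₀ 0), hγ₀ 0]

theorem isLocalHomeomorph_of_norm_mul_eq (hγ : ∀ s, HasDerivAt γ (γ' s) s) (hγ' : Continuous γ')
    (hγ₀ : ∀ s, γ s ≠ 0) (him : ∀ s, (γ' s / γ s).im ≠ 0) {u : ℝ → Circle}
    (hu : ∀ s, ‖γ s‖ * (u s : ℂ) = γ s) : IsLocalHomeomorph u := by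
  obtain ⟨L, hL, hexp⟩ := exists_hasStrictDerivAt_exp_eq hγ hγ' hγ₀
  have hangle : IsLocalHomeomorph fun s ↦ (L s).im :=
    isLocalHomeomorph_of_hasStrictDerivAt
      (fun s ↦ Complex.imCLM.hasStrictFDerivAt.comp_hasStrictDerivAt s (hL s)) him
  have hu_eq : u = Circle.exp ∘ fun s ↦ (L s).im := by
    funext s
    have hnorm : (‖γ s‖ : ℂ) ≠ 0 := by simpa using hγ₀ s
    refine Circle.ext (mul_left_cancel₀ hnorm ?_)
    calc ‖γ s‖ * (u s : ℂ) = Complex.exp (L s) := by rw [hu, hexp]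
      _ = ‖γ s‖ * (Circle.exp (L s).im : ℂ) := by
        rw [← hexp, Complex.norm_exp, Circle.coe_exp, Complex.ofReal_exp, ← Complex.exp_add,
          Complex.re_add_im]
  rw [hu_eq]
  exact Circle.isCoveringMap_exp.isLocalHomeomorph.comp hangle

end PlaneCurve

section Lorentz

theorem lorentz_eq_zero_of_hasDerivAt {α : ℝ → Fin 3 → ℝ} {v : Fin 3 → ℝ} {s c : ℝ}
    (hα : HasDerivAt α v s) (hc : ∀ t, lorentz (α t) (α t) = c) : lorentz (α s) v = 0 := by
  have hi : ∀ i, HasDerivAt (fun t ↦ α t i) (v i) s := hasDerivAt_pi.1 hα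
  have hdiff : HasDerivAt (fun t ↦ lorentz (α t) (α t)) (2 * lorentz (α s) v) s := by
    refine ((((hi 0).mul (hi 0)).add ((hi 1).mul (hi 1))).sub
      ((hi 2).mul (hi 2))).congr_deriv ?_
    simp only [lorentz]
    ring
  have hconst : HasDerivAt (fun t ↦ lorentz (α t) (α t)) 0 s := by
    simpa only [hc] using hasDerivAt_const s c
  linarith [hdiff.unique hconst]

theorem mul_sub_mul_ne_zero_of_lorentz {p v : Fin 3 → ℝ} (hp : 0 < lorentz p p)
    (hv : 0 < lorentz v v) (hpv : lorentz p v = 0) : p 0 * v 1 - p 1 * v 0 ≠ 0 := by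
  intro hzero
  simp only [lorentz] at hp hv hpv
  have hlt : p 2 ^ 2 * v 2 ^ 2 < (p 0 ^ 2 + p 1 ^ 2) * (v 0 ^ 2 + v 1 ^ 2) :=
    mul_lt_mul'' (by linarith) (by linarith) (sq_nonneg _) (sq_nonneg _)
  have lagrange : (p 0 ^ 2 + p 1 ^ 2) * (v 0 ^ 2 + v 1 ^ 2) =
      (p 0 * v 0 + p 1 * v 1) ^ 2 + (p 0 * v 1 - p 1 * v 0) ^ 2 := by ring
  have hdot : p 0 * v 0 + p 1 * v 1 = p 2 * v 2 := by linarith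
  rw [lagrange, hzero, hdot] at hlt
  linarith

end Lorentz

section Horizontal

/-- The horizontal part `x₁ + i x₂` of a vector of `ℝ³`, with the plane `x₃ = 0` read as `ℂ`. -/
noncomputable def horizontal : (Fin 3 → ℝ) →L[ℝ] ℂ :=
  Complex.equivRealProdCLM.symm ∘L
    (ContinuousLinearMap.proj (R := ℝ) (φ := fun _ : Fin 3 ↦ ℝ) 0).prod (.proj 1)

@[simp]
theorem horizontal_re (p : Fin 3 → ℝ) : (horizontal p).re = p 0 := rfl

@[simp]
theorem horizontal_im (p : Fin 3 → ℝ) : (horizontal p).im = p 1 := rfl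

theorem norm_horizontal_sq (p : Fin 3 → ℝ) : ‖horizontal p‖ ^ 2 = lorentz p p + p 2 ^ 2 := by
  rw [← Complex.normSq_eq_norm_sq, Complex.normSq_apply, horizontal_re, horizontal_im, lorentz]
  ring

theorem horizontal_ne_zero {p : Fin 3 → ℝ} (hp : 0 < lorentz p p) : horizontal p ≠ 0 := by
  rw [← norm_ne_zero_iff, ← sq_pos_iff, norm_horizontal_sq]
  positivity

theorem horizontal_div_im (p v : Fin 3 → ℝ) :
    (horizontal v / horizontal p).im =
      (p 0 * v 1 - p 1 * v 0) / Complex.normSq (horizontal p) := by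
  rw [Complex.div_im, horizontal_re, horizontal_im, horizontal_re, horizontal_im]
  ring

theorem norm_mul_horizontal_piProj {p : Fin 3 → ℝ} (hp : p ∈ pseudoSphere) :
    ‖horizontal p‖ * horizontal (piProj p) = horizontal p := by
  have hp' : lorentz p p = 1 := hp
  have haVec : horizontal aVec = 0 := Complex.ext rfl rfl
  have hnorm : √(1 + lorentz p aVec ^ 2) = ‖horizontal p‖ := by
    rw [← Real.sqrt_sq (norm_nonneg (horizontal p)), norm_horizontal_sq, hp']
    simp [lorentz, aVec]
  have hne : (‖horizontal p‖ : ℂ) ≠ 0 := by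
    simpa using horizontal_ne_zero (hp'.symm ▸ one_pos)
  rw [piProj, hnorm, map_smul, map_add, map_smul, haVec, smul_zero, add_zero, Complex.real_smul,
    one_div, Complex.ofReal_inv, mul_inv_cancel_left₀ hne]

/-- The waist, read in the plane `x₃ = 0` as the unit circle of `ℂ`. -/
noncomputable def waistHomeomorphCircle : waist ≃ₜ Circle where
  toFun w := ⟨horizontal w, mem_sphere_zero_iff_norm.2 <| by
    rw [← sq_eq_sq₀ (norm_nonneg _) zero_le_one, norm_horizontal_sq, w.2.1, w.2.2]
    norm_num⟩
  invFun z := ⟨![(z : ℂ).re, (z : ℂ).im, 0], by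
    have hz := Circle.normSq_coe z
    rw [Complex.normSq_apply] at hz
    simp [waist, lorentz, hz]⟩
  left_inv w := Subtype.ext <| funext fun i ↦ by
    fin_cases i
    exacts [rfl, rfl, w.2.2.symm]
  right_inv _ := Circle.ext (Complex.ext rfl rfl)
  continuous_toFun := (horizontal.continuous.comp continuous_subtype_val).subtype_mk _
  continuous_invFun := by
    refine Continuous.subtype_mk (continuous_pi fun i ↦ ?_) _
    fin_cases i
    exacts [Complex.continuous_re.comp continuous_subtype_val,
      Complex.continuous_im.comp continuous_subtype_val, continuous_const]

@[simp]
theorem coe_waistHomeomorphCircle (w : waist) :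
    (waistHomeomorphCircle w : ℂ) = horizontal w := rfl

end Horizontal

/-- `htrans` says that `α` is transverse to the meridians of the pseudosphere, its sections by
vertical planes through the origin. -/
theorem stmt_5_general (T : ℝ) (hT : 0 < T) (α : ℝ → (Fin 3 → ℝ)) (hα : ContDiff ℝ 1 α)
    (hS : ∀ s : ℝ, α s ∈ pseudoSphere)
    (htrans : ∀ s : ℝ, α s 0 * deriv α s 1 - α s 1 * deriv α s 0 ≠ 0)
    (ψ : AddCircle T → waist)
    (hψ : ∀ s : ℝ, (ψ (s : AddCircle T) : Fin 3 → ℝ) = piProj (α s)) :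
    IsCoveringMap ψ := by
  have hne : ∀ s, horizontal (α s) ≠ 0 := fun s ↦ horizontal_ne_zero ((hS s).symm ▸ one_pos)
  have hcircle : IsLocalHomeomorph fun s : ℝ ↦ waistHomeomorphCircle (ψ s) := by
    refine isLocalHomeomorph_of_norm_mul_eq (γ := fun s ↦ horizontal (α s))
      (fun s ↦ horizontal.hasFDerivAt.comp_hasDerivAt s
        (hα.differentiable one_ne_zero s).hasDerivAt)
      (horizontal.continuous.comp (hα.continuous_deriv le_rfl)) hne (fun s ↦ ?_) (fun s ↦ ?_)
    · rw [horizontal_div_im]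
      exact div_ne_zero (htrans s) (Complex.normSq_pos.2 (hne s)).ne'
    · rw [coe_waistHomeomorphCircle, hψ]
      exact norm_mul_horizontal_piProj (hS s)
  have hlift : IsLocalHomeomorph (ψ ∘ ((↑) : ℝ → AddCircle T)) := by
    simpa [Function.comp_def] using waistHomeomorphCircle.symm.isLocalHomeomorph.comp hcircle
  have : Fact (0 < T) := ⟨hT⟩
  exact isLocalHomeomorph_iff_isCoveringMap.1 <| isLocalHomeomorph_of_comp_surjective hlift
    (AddCircle.isCoveringMap_coe T).isLocalHomeomorph QuotientAddGroup.mk_surjective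

theorem stmt_5 (T : ℝ) (hT : 0 < T) (α : ℝ → (Fin 3 → ℝ))
    (hper : Function.Periodic α T) (hα : ContDiff ℝ 1 α)
    (hS : ∀ s : ℝ, α s ∈ pseudoSphere)
    (hsp : ∀ s : ℝ, 0 < lorentz (deriv α s) (deriv α s))
    (ψ : AddCircle T → waist)
    (hψ : ∀ s : ℝ, (ψ (s : AddCircle T) : Fin 3 → ℝ) = piProj (α s)) :
    IsCoveringMap ψ := by
  refine stmt_5_general T hT α hα hS (fun s ↦ ?_) ψ hψ
  exact mul_sub_mul_ne_zero_of_lorentz ((hS s).symm ▸ one_pos) (hsp s)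
    (lorentz_eq_zero_of_hasDerivAt (hα.differentiable one_ne_zero s).hasDerivAt hS)
end

section
/- Let φ be a complex-valued function holomorphic on the open unit disc 𝔻 = {z ∈ ℂ : |z| < 1} and continuous on the closed unit disc, and suppose that Im(z²·φ(z)) = 0 for every z with |z| = 1. Then φ ≡ 0 on 𝔻. (Consequently the Hopf differential of a stationary surface vanishes identically, so the surface is totally umbilical.) -/
open Set Bornology

section MaximumPrinciple

variable {E : Type*} [NormedAddCommGroup E] [NormedSpace ℂ E] [Nontrivial E]
  {f : E → ℂ} {U : Set E} {C : ℝ} {z : E}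

theorem re_le_of_forall_mem_frontier_re_le (hU : IsBounded U) (hf : DiffContOnCl ℂ f U)
    (hC : ∀ w ∈ frontier U, (f w).re ≤ C) (hz : z ∈ closure U) : (f z).re ≤ C := by
  have norm_exp_le_iff (w : E) : ‖Complex.exp (f w)‖ ≤ Real.exp C ↔ (f w).re ≤ C := by
    rw [Complex.norm_exp, Real.exp_le_exp]
  have hexp : DiffContOnCl ℂ (fun w ↦ Complex.exp (f w)) U :=
    Complex.differentiable_exp.comp_diffContOnCl hf
  exact (norm_exp_le_iff z).mp <| Complex.norm_le_of_forall_mem_frontier_norm_le hU hexp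
    (fun w hw ↦ (norm_exp_le_iff w).mpr (hC w hw)) hz

theorem re_eq_of_forall_mem_frontier_re_eq (hU : IsBounded U) (hf : DiffContOnCl ℂ f U)
    (hC : ∀ w ∈ frontier U, (f w).re = C) (hz : z ∈ closure U) : (f z).re = C := by
  refine le_antisymm (re_le_of_forall_mem_frontier_re_le hU hf (fun w hw ↦ (hC w hw).le) hz) ?_
  have hneg : ((-f) z).re ≤ -C :=
    re_le_of_forall_mem_frontier_re_le hU hf.neg (fun w hw ↦ by simp [hC w hw]) hz
  simpa using hneg

theorem im_eq_of_forall_mem_frontier_im_eq (hU : IsBounded U) (hf : DiffContOnCl ℂ f U)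
    (hC : ∀ w ∈ frontier U, (f w).im = C) (hz : z ∈ closure U) : (f z).im = C := by
  have hre : ((-Complex.I • f) z).re = C :=
    re_eq_of_forall_mem_frontier_re_eq hU (hf.const_smul (-Complex.I))
      (fun w hw ↦ by simp [hC w hw]) hz
  simpa using hre

end MaximumPrinciple

theorem exists_eqOn_const_of_forall_mem_frontier_im_eq {f : ℂ → ℂ} {U : Set ℂ} {C : ℝ}
    (hU : IsBounded U) (hUo : IsOpen U) (hUc : IsConnected U) (hf : DiffContOnCl ℂ f U)
    (hC : ∀ z ∈ frontier U, (f z).im = C) : ∃ c : ℂ, EqOn f (fun _ ↦ c) U := by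
  have him : ∀ z ∈ U, (f z).im = C := fun z hz ↦
    im_eq_of_forall_mem_frontier_im_eq hU hf hC (subset_closure hz)
  exact (hf.differentiableOn.analyticOnNhd hUo).eq_const_of_im_eq_const him hUo hUc

theorem stmt_10_general {U : Set ℂ} {g φ : ℂ → ℂ} {p q : ℂ}
    (hU : IsBounded U) (hUo : IsOpen U) (hUc : IsPreconnected U)
    (hg : DiffContOnCl ℂ g U) (hφ : DiffContOnCl ℂ φ U)
    (hp : p ∈ U) (hgp : g p = 0) (hq : q ∈ U) (hgq : g q ≠ 0)
    (hb : ∀ z ∈ frontier U, (g z * φ z).im = 0) : EqOn φ 0 U := by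
  obtain ⟨c, hc⟩ :=
    exists_eqOn_const_of_forall_mem_frontier_im_eq hU hUo ⟨⟨p, hp⟩, hUc⟩ (hg.smul hφ) hb
  have hc0 : c = 0 := by simpa [hgp] using (hc hp).symm
  have hmul : ∀ z ∈ U, g z * φ z = 0 := fun z hz ↦ (hc hz).trans hc0
  -- The identity theorem also covers the zeros of `g`, where one cannot divide by `g z`.
  obtain hg0 | hφ0 := AnalyticOnNhd.eq_zero_or_eq_zero_of_mul_eq_zero
    (hg.differentiableOn.analyticOnNhd hUo) (hφ.differentiableOn.analyticOnNhd hUo) hmul hUc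
  · exact absurd (hg0 q hq) hgq
  · exact hφ0

/-!
If φ is holomorphic on the open unit disc, continuous on the closed unit
disc, and Im(z²·φ(z)) = 0 on the unit circle, then φ ≡ 0 on the disc.
(Analytic core of the proof that stationary surfaces are totally umbilical.)
-/

theorem stmt_10 (φ : ℂ → ℂ)
    (hd : DifferentiableOn ℂ φ (Metric.ball (0 : ℂ) 1))
    (hc : ContinuousOn φ (Metric.closedBall (0 : ℂ) 1))
    (hb : ∀ z : ℂ, ‖z‖ = 1 → (z ^ 2 * φ z).im = 0) :
    ∀ z ∈ Metric.ball (0 : ℂ) 1, φ z = 0 := by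
  have hsq : DiffContOnCl ℂ (fun z : ℂ ↦ z ^ 2) (Metric.ball 0 1) :=
    (differentiable_id.pow 2).diffContOnCl
  have hhalf : (1 / 2 : ℂ) ∈ Metric.ball (0 : ℂ) 1 := by norm_num
  refine stmt_10_general Metric.isBounded_ball Metric.isOpen_ball
    (convex_ball 0 1).isPreconnected hsq (.mk_ball hd hc) (Metric.mem_ball_self one_pos)
    (by norm_num) hhalf (by norm_num) fun z hz ↦ hb z ?_
  rwa [frontier_ball _ one_ne_zero, mem_sphere_zero_iff_norm] at hz
end

section
/- Maximal graph with zero boundary values is trivial: let n ≥ 2, let Ω ⊂ ℝⁿ be a bounded open connected set, and let u be a real-valued function that is C² on an open neighborhood of the closure of Ω, with |∇u(x)| < 1 for all x in the closure of Ω (so the graph of u is a spacelike hypersurface in 𝕃ⁿ⁺¹). Suppose u satisfies the maximal hypersurface equation div(∇u/√(1 − |∇u|²)) = 0 on Ω and u = 0 on the boundary ∂Ω. Then u ≡ 0 on Ω. (This is the graph formulation of the statement: a compact spacelike hypersurface in 𝕃ⁿ⁺¹ with zero mean curvature and boundary in a spacelike hyperplane P lies in P.) -/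
/-!
Maximal graph with zero boundary values is trivial: if u is C² near the
closure of a bounded open connected Ω ⊂ ℝⁿ (n ≥ 2), |∇u| < 1 on the closure
(spacelike graph), u solves div(∇u/√(1−|∇u|²)) = 0 on Ω (zero mean curvature)
and u = 0 on ∂Ω, then u ≡ 0 on Ω.
-/

/-- The vector field ∇u/√(1 − |∇u|²) whose divergence is n times the mean
curvature of the spacelike graph of u in Lorentz–Minkowski space. -/
noncomputable def mcField {n : ℕ} (u : EuclideanSpace ℝ (Fin n) → ℝ)
    (x : EuclideanSpace ℝ (Fin n)) : EuclideanSpace ℝ (Fin n) :=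
  (1 / Real.sqrt (1 - ‖gradient u x‖ ^ 2)) • gradient u x

/-- The divergence of a vector field on ℝⁿ: the sum of the i-th partial
derivatives of the i-th components. -/
noncomputable def diverg {n : ℕ}
    (F : EuclideanSpace ℝ (Fin n) → EuclideanSpace ℝ (Fin n))
    (x : EuclideanSpace ℝ (Fin n)) : ℝ :=
  ∑ i : Fin n, fderiv ℝ F x (EuclideanSpace.single i 1) i

/-!
If `u - ⟪a, ·⟫ + ε‖·‖²` has an interior local maximum at `y`, then `∇u y = a - 2εy` and
`D²u y ≤ -2ε`. When `‖a‖ < 1` and `ε` is small, `y` is therefore a spacelike point, and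
`div (∇u / √(1 - |∇u|²)) = Δu / √(1 - |∇u|²) + D²u(∇u, ∇u) / √(1 - |∇u|²)³` is negative there.
So for a maximal graph these perturbations attain their maxima on the boundary, and `ε → 0` gives
`u ≤ ⟪a, ·⟫ + c` inside as soon as it holds on the boundary. The equation is odd in `u`, which gives
the reverse inequality.
-/

open Filter Topology
open scoped InnerProductSpace

theorem deriv_deriv_nonpos_of_isLocalMax {f : ℝ → ℝ} {x : ℝ} (hmax : IsLocalMax f x)
    (hf : ContinuousAt f x) : deriv (deriv f) x ≤ 0 := by
  by_contra! hpos
  have hmin : IsLocalMin f x := isLocalMin_of_deriv_deriv_pos hpos hmax.deriv_eq_zero hf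
  have hconst : f =ᶠ[𝓝 x] fun _ => f x := by
    filter_upwards [hmax, hmin] with t hle hge using le_antisymm hle hge
  have hzero : deriv (deriv f) x = 0 := by
    rw [hconst.deriv.deriv_eq]
    simp
  exact hpos.ne' hzero

theorem le_of_frontier_le_of_eventually_not_isLocalMax {E : Type*} [NormedAddCommGroup E]
    [ProperSpace E] {Ω : Set E} (hΩo : IsOpen Ω) (hΩb : Bornology.IsBounded Ω) {v : E → ℝ}
    (hv : ContinuousOn v (closure Ω)) {c : ℝ} (hbd : ∀ x ∈ frontier Ω, v x ≤ c)
    (hloc : ∀ᶠ ε in 𝓝[>] (0 : ℝ), ∀ y ∈ Ω, ¬IsLocalMax (fun z => v z + ε * ‖z‖ ^ 2) y) :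
    ∀ x ∈ Ω, v x ≤ c := by
  intro x hx
  have hcompact : IsCompact (closure Ω) := hΩb.isCompact_closure
  obtain ⟨R, -, hR⟩ := hcompact.isBounded.exists_pos_norm_le
  have hbound : ∀ᶠ ε in 𝓝[>] (0 : ℝ), v x ≤ c + ε * R ^ 2 := by
    filter_upwards [hloc, self_mem_nhdsWithin] with ε hε (hpos : 0 < ε)
    obtain ⟨y, hy, hymax⟩ := hcompact.exists_isMaxOn ⟨x, subset_closure hx⟩
      (f := fun z => v z + ε * ‖z‖ ^ 2) (hv.add (by fun_prop))
    have hyΩ : y ∉ Ω := fun hyΩ => hε y hyΩ <|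
      hymax.isLocalMax (mem_of_superset (hΩo.mem_nhds hyΩ) subset_closure)
    calc v x ≤ v x + ε * ‖x‖ ^ 2 := le_add_of_nonneg_right (by positivity)
      _ ≤ v y + ε * ‖y‖ ^ 2 := hymax (subset_closure hx)
      _ ≤ c + ε * R ^ 2 := by
        gcongr
        · exact hbd y (hΩo.frontier_eq ▸ ⟨hy, hyΩ⟩)
        · exact hR y hy
  have hlim : Tendsto (fun ε : ℝ => c + ε * R ^ 2) (𝓝[>] 0) (𝓝 c) := by
    have hcont : Continuous fun ε : ℝ => c + ε * R ^ 2 := by fun_prop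
    simpa using (hcont.tendsto 0).mono_left nhdsWithin_le_nhds
  exact ge_of_tendsto hlim hbound

section InnerProductSpace

variable {E : Type*} [NormedAddCommGroup E] [InnerProductSpace ℝ E]

theorem hasFDerivAt_inv_sqrt_one_sub_norm_sq {G : Type*} [NormedAddCommGroup G] [NormedSpace ℝ G]
    {F : G → E} {F' : G →L[ℝ] E} {x : G} (hF : HasFDerivAt F F' x) (hx : ‖F x‖ < 1) :
    HasFDerivAt (fun z => 1 / √(1 - ‖F z‖ ^ 2))
      ((1 / √(1 - ‖F x‖ ^ 2) ^ 3) • (innerSL ℝ (F x)).comp F') x := by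
  have hpos : 0 < 1 - ‖F x‖ ^ 2 := by nlinarith [norm_nonneg (F x)]
  have hsqrt : 0 < √(1 - ‖F x‖ ^ 2) := Real.sqrt_pos.2 hpos
  have hderiv : HasDerivAt (fun s : ℝ => 1 / √(1 - s)) (1 / (2 * √(1 - ‖F x‖ ^ 2) ^ 3))
      (‖F x‖ ^ 2) := by
    simp only [one_div]
    refine ((((hasDerivAt_id (‖F x‖ ^ 2)).const_sub 1).sqrt hpos.ne').inv hsqrt.ne').congr_deriv ?_
    simp only [id]
    field_simp
  refine (hderiv.comp_hasFDerivAt x hF.norm_sq).congr_fderiv ?_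
  rw [← Nat.cast_smul_eq_nsmul ℝ, smul_smul]
  congr 1
  push_cast
  field_simp

variable [CompleteSpace E]

theorem gradient_fun_neg (u : E → ℝ) : gradient (fun z => -u z) = -gradient u := by
  ext1 x
  simp [gradient, fderiv_fun_neg]

theorem differentiableAt_gradient {u : E → ℝ} {y : E} (hu : ContDiffAt ℝ 2 u y) :
    DifferentiableAt ℝ (gradient u) y :=
  (InnerProductSpace.toDual ℝ E).symm.toContinuousLinearEquiv.differentiableAt.comp y
    ((hu.fderiv_right (m := 1) (by norm_num)).differentiableAt one_ne_zero)

theorem eq_zero_of_isLocalMax_of_hasGradientAt {f : E → ℝ} {g y : E} (hmax : IsLocalMax f y)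
    (hf : HasGradientAt f g y) : g = 0 := by
  simpa using hmax.hasFDerivAt_eq_zero hf.hasFDerivAt

theorem inner_nonpos_of_isLocalMax_of_hasGradientAt {f : E → ℝ} {g : E → E} {A : E →L[ℝ] E} {y : E}
    (hmax : IsLocalMax f y) (hf : ∀ᶠ z in 𝓝 y, HasGradientAt f (g z) z)
    (hg : HasFDerivAt g A y) (e : E) : ⟪A e, e⟫_ℝ ≤ 0 := by
  let line : ℝ → E := fun t => y + t • e
  have hline0 : line 0 = y := by simp [line]
  have hline (t : ℝ) : HasDerivAt line e t := by
    simpa [line] using ((hasDerivAt_id t).smul_const e).const_add y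
  have htend : Tendsto line (𝓝 0) (𝓝 y) := hline0 ▸ (hline 0).continuousAt.tendsto
  have hfirst : ∀ᶠ t in 𝓝 0, HasDerivAt (f ∘ line) ⟪g (line t), e⟫_ℝ t := by
    filter_upwards [htend.eventually hf] with t ht
    simpa using ht.hasFDerivAt.comp_hasDerivAt t (hline t)
  have hsecond : HasDerivAt (fun t => ⟪g (line t), e⟫_ℝ) ⟪A e, e⟫_ℝ 0 := by
    have hgline := HasFDerivAt.comp_hasDerivAt 0 (hline0.symm ▸ hg) (hline 0)
    simpa using hgline.inner ℝ (hasDerivAt_const 0 e)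
  have hderiv : deriv (f ∘ line) =ᶠ[𝓝 0] fun t => ⟪g (line t), e⟫_ℝ :=
    hfirst.mono fun t ht => ht.deriv
  have hmaxline : IsLocalMax (f ∘ line) 0 :=
    IsLocalMax.comp_continuous (hline0.symm ▸ hmax) (hline 0).continuousAt
  calc ⟪A e, e⟫_ℝ = deriv (deriv (f ∘ line)) 0 := by rw [hderiv.deriv_eq, hsecond.deriv]
    _ ≤ 0 := deriv_deriv_nonpos_of_isLocalMax hmaxline hfirst.self_of_nhds.continuousAt

theorem hasGradientAt_sub_inner_add_norm_sq {u : E → ℝ} {z : E} (hu : DifferentiableAt ℝ u z)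
    (a : E) (ε : ℝ) :
    HasGradientAt (fun w => u w - ⟪a, w⟫_ℝ + ε * ‖w‖ ^ 2)
      (gradient u z - a + (2 * ε) • z) z := by
  rw [hasGradientAt_iff_hasFDerivAt]
  refine ((hu.hasGradientAt.hasFDerivAt.sub (innerSL ℝ a).hasFDerivAt).add
    ((hasFDerivAt_id z).norm_sq.const_mul ε)).congr_fderiv ?_
  ext w
  simp
  ring

theorem gradient_eq_of_isLocalMax_sub_inner_add_norm_sq {u : E → ℝ} {a y : E} {ε : ℝ}
    (hmax : IsLocalMax (fun z => u z - ⟪a, z⟫_ℝ + ε * ‖z‖ ^ 2) y) (hu : DifferentiableAt ℝ u y) :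
    gradient u y = a - (2 * ε) • y := by
  have hzero := eq_zero_of_isLocalMax_of_hasGradientAt hmax
    (hasGradientAt_sub_inner_add_norm_sq hu a ε)
  rwa [sub_add, sub_eq_zero] at hzero

theorem inner_fderiv_gradient_le_of_isLocalMax_sub_inner_add_norm_sq {u : E → ℝ} {a y : E}
    {ε : ℝ} (hmax : IsLocalMax (fun z => u z - ⟪a, z⟫_ℝ + ε * ‖z‖ ^ 2) y)
    (hu : ContDiffAt ℝ 2 u y) (e : E) :
    ⟪fderiv ℝ (gradient u) y e, e⟫_ℝ ≤ -(2 * ε * ‖e‖ ^ 2) := by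
  have hdiff : ∀ᶠ z in 𝓝 y, DifferentiableAt ℝ u z :=
    (hu.eventually (by simp)).mono fun z hz => hz.differentiableAt two_ne_zero
  have hnonpos := inner_nonpos_of_isLocalMax_of_hasGradientAt hmax
    (hdiff.mono fun z hz => hasGradientAt_sub_inner_add_norm_sq hz a ε)
    (((differentiableAt_gradient hu).hasFDerivAt.sub_const a).add
      ((hasFDerivAt_id y).const_smul (2 * ε))) e
  have hsum : ⟪fderiv ℝ (gradient u) y e, e⟫_ℝ + 2 * ε * ‖e‖ ^ 2 ≤ 0 := by
    simpa [inner_add_left, real_inner_smul_left] using hnonpos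
  linarith

end InnerProductSpace

section Euclidean

variable {n : ℕ}

theorem diverg_neg (F : EuclideanSpace ℝ (Fin n) → EuclideanSpace ℝ (Fin n))
    (x : EuclideanSpace ℝ (Fin n)) : diverg (-F) x = -diverg F x := by
  simp [diverg, fderiv_neg]

theorem diverg_eq_sum_inner (F : EuclideanSpace ℝ (Fin n) → EuclideanSpace ℝ (Fin n))
    (x : EuclideanSpace ℝ (Fin n)) :
    diverg F x =
      ∑ i, ⟪fderiv ℝ F x (EuclideanSpace.single i 1), EuclideanSpace.single i (1 : ℝ)⟫_ℝ := by
  simp [diverg, EuclideanSpace.inner_single_right]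

theorem diverg_smul {φ : EuclideanSpace ℝ (Fin n) → ℝ}
    {F : EuclideanSpace ℝ (Fin n) → EuclideanSpace ℝ (Fin n)} {x : EuclideanSpace ℝ (Fin n)}
    (hφ : DifferentiableAt ℝ φ x) (hF : DifferentiableAt ℝ F x) :
    diverg (fun z => φ z • F z) x = φ x * diverg F x + fderiv ℝ φ x (F x) := by
  have hbasis : F x = ∑ i, F x i • EuclideanSpace.single i (1 : ℝ) := by
    simpa using ((EuclideanSpace.basisFun (Fin n) ℝ).sum_repr (F x)).symm
  have hpartial : fderiv ℝ φ x (F x) =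
      ∑ i, fderiv ℝ φ x (EuclideanSpace.single i 1) * F x i := by
    conv_lhs => rw [hbasis]
    simp [mul_comm]
  simp [diverg, fderiv_fun_smul hφ hF, hpartial, Finset.sum_add_distrib, Finset.mul_sum]

theorem mcField_fun_neg (u : EuclideanSpace ℝ (Fin n) → ℝ) :
    mcField (fun z => -u z) = -mcField u := by
  ext1 x
  simp [mcField, gradient_fun_neg]

theorem diverg_mcField {u : EuclideanSpace ℝ (Fin n) → ℝ} {y : EuclideanSpace ℝ (Fin n)}
    (hu : DifferentiableAt ℝ (gradient u) y) (hy : ‖gradient u y‖ < 1) :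
    diverg (mcField u) y = 1 / √(1 - ‖gradient u y‖ ^ 2) * diverg (gradient u) y +
      1 / √(1 - ‖gradient u y‖ ^ 2) ^ 3 *
        ⟪fderiv ℝ (gradient u) y (gradient u y), gradient u y⟫_ℝ := by
  have hφ := hasFDerivAt_inv_sqrt_one_sub_norm_sq hu.hasFDerivAt hy
  have hprod : diverg (mcField u) y = _ := diverg_smul hφ.differentiableAt hu
  rw [hprod, hφ.fderiv, real_inner_comm]
  rfl

theorem diverg_mcField_neg_of_isLocalMax_sub_inner_add_norm_sq [NeZero n]
    {u : EuclideanSpace ℝ (Fin n) → ℝ} {a y : EuclideanSpace ℝ (Fin n)} {ε : ℝ} (hε : 0 < ε)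
    (hu : ContDiffAt ℝ 2 u y) (hy : ‖gradient u y‖ < 1)
    (hmax : IsLocalMax (fun z => u z - ⟪a, z⟫_ℝ + ε * ‖z‖ ^ 2) y) :
    diverg (mcField u) y < 0 := by
  have hhess := inner_fderiv_gradient_le_of_isLocalMax_sub_inner_add_norm_sq hmax hu
  have hlaplacian : diverg (gradient u) y < 0 := by
    rw [diverg_eq_sum_inner]
    refine Finset.sum_neg (fun i _ => (hhess _).trans_lt ?_) Finset.univ_nonempty
    simpa using hε
  have hquad : ⟪fderiv ℝ (gradient u) y (gradient u y), gradient u y⟫_ℝ ≤ 0 :=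
    (hhess _).trans (neg_nonpos.2 (by positivity))
  have hsqrt : 0 < √(1 - ‖gradient u y‖ ^ 2) :=
    Real.sqrt_pos.2 (by nlinarith [norm_nonneg (gradient u y)])
  rw [diverg_mcField (differentiableAt_gradient hu) hy]
  exact add_neg_of_neg_of_nonpos (mul_neg_of_pos_of_neg (by positivity) hlaplacian)
    (mul_nonpos_of_nonneg_of_nonpos (by positivity) hquad)

theorem le_inner_add_of_frontier_le_of_diverg_mcField_nonneg [NeZero n]
    {Ω : Set (EuclideanSpace ℝ (Fin n))} (hΩo : IsOpen Ω) (hΩb : Bornology.IsBounded Ω)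
    {u : EuclideanSpace ℝ (Fin n) → ℝ} (hu : ContDiffOn ℝ 2 u Ω)
    (hcont : ContinuousOn u (closure Ω)) {a : EuclideanSpace ℝ (Fin n)} {c : ℝ} (ha : ‖a‖ < 1)
    (hsub : ∀ x ∈ Ω, ‖gradient u x‖ < 1 → 0 ≤ diverg (mcField u) x)
    (hbd : ∀ x ∈ frontier Ω, u x ≤ ⟪a, x⟫_ℝ + c) :
    ∀ x ∈ Ω, u x ≤ ⟪a, x⟫_ℝ + c := by
  obtain ⟨R, -, hR⟩ := hΩb.exists_pos_norm_le
  have hsmall : ∀ᶠ ε in 𝓝[>] (0 : ℝ), ‖a‖ + 2 * ε * R < 1 := by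
    have hlim : Continuous fun ε : ℝ => ‖a‖ + 2 * ε * R := by fun_prop
    exact nhdsWithin_le_nhds (hlim.continuousAt.eventually_lt_const (by simpa using ha))
  suffices hle : ∀ x ∈ Ω, u x - ⟪a, x⟫_ℝ ≤ c from fun x hx => sub_le_iff_le_add'.1 (hle x hx)
  refine le_of_frontier_le_of_eventually_not_isLocalMax hΩo hΩb (hcont.sub (by fun_prop))
    (fun x hx => sub_le_iff_le_add'.2 (hbd x hx)) ?_
  filter_upwards [hsmall, self_mem_nhdsWithin] with ε hεR (hε : 0 < ε) y hy hmax
  have huy : ContDiffAt ℝ 2 u y := hu.contDiffAt (hΩo.mem_nhds hy)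
  have hspacelike : ‖gradient u y‖ < 1 :=
    calc ‖gradient u y‖ = ‖a - (2 * ε) • y‖ := by
          rw [gradient_eq_of_isLocalMax_sub_inner_add_norm_sq hmax
            (huy.differentiableAt two_ne_zero)]
      _ ≤ ‖a‖ + ‖(2 * ε) • y‖ := norm_sub_le _ _
      _ = ‖a‖ + 2 * ε * ‖y‖ := by rw [norm_smul, Real.norm_of_nonneg (by positivity)]
      _ ≤ ‖a‖ + 2 * ε * R := by gcongr; exact hR y hy
      _ < 1 := hεR
  exact (hsub y hy hspacelike).not_gt
    (diverg_mcField_neg_of_isLocalMax_sub_inner_add_norm_sq hε huy hspacelike hmax)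

end Euclidean

/-- The spacelike hyperplanes of 𝕃ⁿ⁺¹ are the graphs of `⟪a, ·⟫ + c` with `‖a‖ < 1`. -/
theorem stmt_11_general {n : ℕ} [NeZero n] (Ω : Set (EuclideanSpace ℝ (Fin n)))
    (hΩo : IsOpen Ω) (hΩb : Bornology.IsBounded Ω) (u : EuclideanSpace ℝ (Fin n) → ℝ)
    (hu : ContDiffOn ℝ 2 u Ω) (hcont : ContinuousOn u (closure Ω))
    (a : EuclideanSpace ℝ (Fin n)) (c : ℝ) (ha : ‖a‖ < 1)
    (hmax : ∀ x ∈ Ω, ‖gradient u x‖ < 1 → diverg (mcField u) x = 0)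
    (hbd : ∀ x ∈ frontier Ω, u x = ⟪a, x⟫_ℝ + c) :
    ∀ x ∈ Ω, u x = ⟪a, x⟫_ℝ + c := by
  intro x hx
  have hupper : u x ≤ ⟪a, x⟫_ℝ + c :=
    le_inner_add_of_frontier_le_of_diverg_mcField_nonneg hΩo hΩb hu hcont ha
      (fun z hz hsp => (hmax z hz hsp).ge) (fun z hz => (hbd z hz).le) x hx
  have hlower : -u x ≤ ⟪-a, x⟫_ℝ + -c := by
    refine le_inner_add_of_frontier_le_of_diverg_mcField_nonneg hΩo hΩb hu.neg hcont.neg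
      (by rwa [norm_neg]) (fun z hz hsp => ?_) (fun z hz => ?_) x hx
    · rw [gradient_fun_neg, Pi.neg_apply, norm_neg] at hsp
      rw [mcField_fun_neg, diverg_neg, hmax z hz hsp, neg_zero]
    · rw [hbd z hz, inner_neg_left, neg_add]
  rw [inner_neg_left] at hlower
  linarith

theorem stmt_11 (n : ℕ) (hn : 2 ≤ n) (Ω : Set (EuclideanSpace ℝ (Fin n)))
    (hΩo : IsOpen Ω) (hΩb : Bornology.IsBounded Ω) (hΩc : IsConnected Ω)
    (u : EuclideanSpace ℝ (Fin n) → ℝ)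
    (U : Set (EuclideanSpace ℝ (Fin n))) (hUo : IsOpen U) (hUcl : closure Ω ⊆ U)
    (hu : ContDiffOn ℝ 2 u U)
    (hsp : ∀ x ∈ closure Ω, ‖gradient u x‖ < 1)
    (hmax : ∀ x ∈ Ω, diverg (mcField u) x = 0)
    (hbd : ∀ x ∈ frontier Ω, u x = 0) :
    ∀ x ∈ Ω, u x = 0 := by
  have : NeZero n := ⟨by omega⟩
  simpa using stmt_11_general Ω hΩo hΩb u (hu.mono (subset_closure.trans hUcl))
    (hu.continuousOn.mono hUcl) 0 0 (by simp) (fun x hx _ => hmax x hx) (by simpa using hbd)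
end
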